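/- (Theorem: feasibility error of Pro-DUCA) Suppose the problem setup holds and the sequences (x^k)_{k≥0}, (y^k)_{k≥0}, (z^k)_{k≥0} are generated by Pro-DUCA (no compactness of the X_i is assumed). Then for every k ≥ 1, the Euclidean norm of the vector ( [Σ_{i=1}^N g_i(x̄_i^k)]_+ , Σ_{i=1}^N h_i(x̄_i^k) ) ∈ ℝ^{m+p} is at most (√(N·λ_1(P_A))/k)·(‖y^0‖_A + C_1 + C_2), where C_1 := √(N·λ_1(P_A))·‖y°‖, C_2 := ((‖y^0‖_A + C_1)² + α‖x^0 − x*‖² + (1/ρ)·(v^0 − v*)ᵀH̃†(v^0 − v*))^{1/2}, and [w]_+ denotes the componentwise maximum of w with 0. -/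

import Mathlib

open Matrix
open scoped Kronecker

abbrev Blk (m p : ℕ) := Sum (Fin m) (Fin p)
abbrev Idx (N m p : ℕ) := Fin N × Blk m p

def projK {N m p : ℕ} (y : Idx N m p → ℝ) : Idx N m p → ℝ :=
  fun ij =>
    match ij with
    | (i, Sum.inl j) => max (y (i, Sum.inl j)) 0
    | (i, Sum.inr j) => y (i, Sum.inr j)

def projKpolar {N m p : ℕ} (y : Idx N m p → ℝ) : Idx N m p → ℝ :=
  fun ij =>
    match ij with
    | (i, Sum.inl j) => min (y (i, Sum.inl j)) 0
    | (_, Sum.inr _) => 0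

def memK {N m p : ℕ} (y : Idx N m p → ℝ) : Prop :=
  ∀ (i : Fin N) (j : Fin m), 0 ≤ y (i, Sum.inl j)

def IsMPInv {n : Type*} [Fintype n] [DecidableEq n] (M Md : Matrix n n ℝ) : Prop :=
  M * Md * M = M ∧ Md * M * Md = Md ∧ (M * Md)ᵀ = M * Md ∧ (Md * M)ᵀ = Md * M

def quadForm {n : Type*} [Fintype n] (M : Matrix n n ℝ) (w : n → ℝ) : ℝ :=
  w ⬝ᵥ (M *ᵥ w)

/-!
The Lyapunov function `‖y - y*‖²_A + α‖x - x*‖² + ρ⁻¹‖v - v*‖²_{H̃†}`, where `v = H̃^{1/2} z`, does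
not increase along the iteration. The descent property of `½‖𝒫_K[·]‖²` turns the optimality of
`x^{k+1}` into a proximal inequality at `x*` with multiplier `y^{k+1}`, the saddle inequality bounds
it from the other side, and Moreau's decomposition
`g̃(x^{k+1}) = A(y^{k+1} - y^k) + ρHy^{k+1} + v^k - σ^{k+1}` converts the remaining inner product
into differences of the squared norms. Hence `‖y^k - y*‖_A ≤ C₂`.

Summing the decomposition over the agents kills `H` and `v`, so `Σ_{l ≤ k} Σ_i g̃_i(x_i^l)` is
bounded by `Σ_i [A(y^k - y^0)]_i` in the inequality components and equal to it in the equality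
components. Jensen's inequality carries this over to the average `x̄^k`, and the Cauchy-Schwarz
estimate `‖Σ_i [A w]_i‖ ≤ √(N λ₁(P_A)) ‖w‖_A` together with the triangle inequality through `y*`
gives the rate.
-/

section QuadForm

variable {n : Type*} [Fintype n] {M : Matrix n n ℝ}

theorem quadForm_nonneg (hM : M.PosSemidef) (w : n → ℝ) : 0 ≤ quadForm M w := by
  simpa only [star_trivial, quadForm] using hM.dotProduct_mulVec_nonneg w

theorem dotProduct_mulVec_comm_of_isSymm (hM : M.IsSymm) (u w : n → ℝ) :
    u ⬝ᵥ M *ᵥ w = w ⬝ᵥ M *ᵥ u := by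
  rw [dotProduct_mulVec, ← mulVec_transpose, hM.eq, dotProduct_comm]

theorem abs_dotProduct_mulVec_le (hM : M.PosSemidef) (u w : n → ℝ) :
    |u ⬝ᵥ M *ᵥ w| ≤ √(quadForm M u) * √(quadForm M w) := by
  let := M.toSeminormedAddCommGroup hM
  let := M.toInnerProductSpace hM
  have hinner (u w : n → ℝ) : inner ℝ u w = u ⬝ᵥ M *ᵥ w := dotProduct_comm _ _
  have h := abs_real_inner_le_norm u w
  simpa only [norm_eq_sqrt_real_inner, hinner, quadForm] using h

theorem quadForm_sub (hM : M.IsSymm) (u w : n → ℝ) :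
    quadForm M (u - w) = quadForm M u - 2 * u ⬝ᵥ M *ᵥ w + quadForm M w := by
  have hcomm := dotProduct_mulVec_comm_of_isSymm hM w u
  simp only [quadForm, mulVec_sub, dotProduct_sub, sub_dotProduct, hcomm]
  ring

theorem quadForm_add_smul (hM : M.IsSymm) (u w : n → ℝ) (t : ℝ) :
    quadForm M (u + t • w) = quadForm M u + t * (2 * M *ᵥ u ⬝ᵥ w) + t ^ 2 * quadForm M w := by
  have hcomm := dotProduct_mulVec_comm_of_isSymm hM w u
  simp only [quadForm, mulVec_add, mulVec_smul, dotProduct_add, add_dotProduct, smul_dotProduct,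
    dotProduct_smul, smul_eq_mul, hcomm, dotProduct_comm (M *ᵥ u)]
  ring

theorem sqrt_quadForm_sub_le (hM : M.PosSemidef) (u w : n → ℝ) :
    √(quadForm M (u - w)) ≤ √(quadForm M u) + √(quadForm M w) := by
  refine Real.sqrt_le_iff.2 ⟨by positivity, ?_⟩
  rw [quadForm_sub (isHermitian_iff_isSymm.1 hM.1), add_sq, Real.sq_sqrt (quadForm_nonneg hM u),
    Real.sq_sqrt (quadForm_nonneg hM w)]
  linarith [neg_le_of_abs_le (abs_dotProduct_mulVec_le hM u w)]

theorem quadForm_sub_quadForm_le (hM : M.PosSemidef) (u w : n → ℝ) :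
    quadForm M u - quadForm M w ≤ 2 * u ⬝ᵥ M *ᵥ (u - w) := by
  have hnonneg := quadForm_nonneg hM (u - w)
  rw [quadForm_sub (isHermitian_iff_isSymm.1 hM.1)] at hnonneg
  rw [mulVec_sub, dotProduct_sub, ← quadForm]
  linarith

theorem quadForm_le_of_eigenvalue_le {lam : ℝ} (hM : M.IsHermitian)
    (hlam : ∀ (μ : ℝ) (v : n → ℝ), v ≠ 0 → M *ᵥ v = μ • v → μ ≤ lam) (w : n → ℝ) :
    quadForm M w ≤ lam * (w ⬝ᵥ w) := by
  classical
  have hdiff : (lam • (1 : Matrix n n ℝ) - M).IsHermitian :=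
    .sub (isHermitian_iff_isSymm.2 (isSymm_one.smul lam)) hM
  have hpsd : (lam • (1 : Matrix n n ℝ) - M).PosSemidef := by
    refine hdiff.posSemidef_iff_eigenvalues_nonneg.2 fun i => ?_
    have hvec : M *ᵥ hdiff.eigenvectorBasis i =
        (lam - hdiff.eigenvalues i) • hdiff.eigenvectorBasis i := by
      rw [sub_smul, ← hdiff.mulVec_eigenvectorBasis i, sub_mulVec, smul_mulVec, one_mulVec]
      abel
    have hne : (hdiff.eigenvectorBasis i : n → ℝ) ≠ 0 := fun h =>
      hdiff.eigenvectorBasis.orthonormal.ne_zero i (by ext j; exact congrFun h j)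
    simpa using hlam _ _ hne hvec
  have hnonneg := quadForm_nonneg hpsd w
  rw [quadForm, sub_mulVec, smul_mulVec, one_mulVec, dotProduct_sub, dotProduct_smul,
    smul_eq_mul] at hnonneg
  exact sub_nonneg.1 hnonneg

end QuadForm

section Consensus

variable {ι β : Type*}

/-- The consensus vector `1 ⊗ r`, every block of which is `r`. -/
def consensus (r : β → ℝ) : ι × β → ℝ := fun e => r e.2

variable [Fintype ι]

/-- The aggregation operator `1ᵀ ⊗ I`, which adds up the blocks of a stacked vector. -/
def agentSum : (ι × β → ℝ) →ₗ[ℝ] (β → ℝ) where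
  toFun w j := ∑ i, w (i, j)
  map_add' _ _ := funext fun _ => Finset.sum_add_distrib
  map_smul' _ _ := funext fun _ => (Finset.mul_sum _ _ _).symm

theorem agentSum_apply (w : ι × β → ℝ) (j : β) : agentSum w j = ∑ i, w (i, j) := rfl

theorem agentSum_consensus (r : β → ℝ) :
    agentSum (consensus (ι := ι) r) = (Fintype.card ι : ℝ) • r := by
  ext j
  simp [agentSum_apply, consensus]

variable [Fintype β]

theorem consensus_dotProduct (r : β → ℝ) (w : ι × β → ℝ) :
    consensus r ⬝ᵥ w = r ⬝ᵥ agentSum w := by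
  simp only [dotProduct, consensus, agentSum_apply, Fintype.sum_prod_type_right, Finset.mul_sum]

theorem agentSum_mulVec_eq_zero {M : Matrix (ι × β) (ι × β) ℝ} (hM : M.IsSymm)
    (hker : ∀ r, M *ᵥ consensus r = 0) (w : ι × β → ℝ) : agentSum (M *ᵥ w) = 0 := by
  refine dotProduct_eq_zero _ fun r => ?_
  rw [dotProduct_comm, ← consensus_dotProduct, dotProduct_mulVec_comm_of_isSymm hM, hker,
    dotProduct_zero]

theorem sqrt_agentSum_mulVec_le {M : Matrix (ι × β) (ι × β) ℝ} (hM : M.PosSemidef) {L : ℝ}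
    (hL : ∀ r : β → ℝ, quadForm M (consensus r) ≤ L * (r ⬝ᵥ r)) (w : ι × β → ℝ) :
    √(agentSum (M *ᵥ w) ⬝ᵥ agentSum (M *ᵥ w)) ≤ √L * √(quadForm M w) := by
  set r := agentSum (M *ᵥ w)
  have hr : 0 ≤ r ⬝ᵥ r := dotProduct_self_star_nonneg r
  have hcs : √(r ⬝ᵥ r) * √(r ⬝ᵥ r) ≤ √(r ⬝ᵥ r) * (√L * √(quadForm M w)) :=
    calc √(r ⬝ᵥ r) * √(r ⬝ᵥ r) = consensus r ⬝ᵥ M *ᵥ w := by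
          rw [Real.mul_self_sqrt hr, consensus_dotProduct]
      _ ≤ √(quadForm M (consensus r)) * √(quadForm M w) :=
          (le_abs_self _).trans (abs_dotProduct_mulVec_le hM _ _)
      _ ≤ √(L * (r ⬝ᵥ r)) * √(quadForm M w) := by gcongr; exact hL r
      _ = √(r ⬝ᵥ r) * (√L * √(quadForm M w)) := by rw [Real.sqrt_mul' _ hr]; ring
  rcases (Real.sqrt_nonneg (r ⬝ᵥ r)).eq_or_lt with hzero | hpos
  · rw [← hzero]; positivity
  · exact le_of_mul_le_mul_left hcs hpos

variable [DecidableEq β]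

theorem kronecker_one_mulVec_apply (P : Matrix ι ι ℝ) (w : ι × β → ℝ) (i : ι) (j : β) :
    ((P ⊗ₖ (1 : Matrix β β ℝ)) *ᵥ w) (i, j) = (P *ᵥ fun i' => w (i', j)) i := by
  simp [mulVec, dotProduct, Fintype.sum_prod_type, kroneckerMap_apply, one_apply]

theorem kronecker_one_mulVec_eq_zero_iff {P : Matrix ι ι ℝ}
    (hP : ∀ u : ι → ℝ, P *ᵥ u = 0 ↔ ∃ t : ℝ, u = fun _ => t) (w : ι × β → ℝ) :
    (P ⊗ₖ (1 : Matrix β β ℝ)) *ᵥ w = 0 ↔ ∃ r, w = consensus r := by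
  have hcols : (P ⊗ₖ (1 : Matrix β β ℝ)) *ᵥ w = 0 ↔ ∀ j, P *ᵥ (fun i => w (i, j)) = 0 := by
    simp only [funext_iff, Prod.forall, kronecker_one_mulVec_apply, Pi.zero_apply]
    exact forall_comm
  simp only [hcols, hP, Classical.skolem, funext_iff, Prod.forall, consensus]
  exact exists_congr fun r => forall_comm

theorem quadForm_kronecker_one_consensus (P : Matrix ι ι ℝ) (r : β → ℝ) :
    quadForm (P ⊗ₖ (1 : Matrix β β ℝ)) (consensus r) = quadForm P 1 * (r ⬝ᵥ r) := by
  have hrow (j : β) : agentSum ((P ⊗ₖ (1 : Matrix β β ℝ)) *ᵥ consensus r) j =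
      quadForm P 1 * r j := by
    simp only [agentSum_apply, kronecker_one_mulVec_apply]
    simp only [consensus, quadForm, dotProduct, mulVec, Pi.one_apply, one_mul, mul_one,
      Finset.sum_mul]
  rw [quadForm, consensus_dotProduct]
  simp only [dotProduct, hrow, Finset.mul_sum]
  exact Finset.sum_congr rfl fun j _ => by ring

theorem quadForm_kronecker_one_consensus_le {P : Matrix ι ι ℝ} {lam : ℝ}
    (hP : P.IsHermitian)
    (hlam : ∀ (μ : ℝ) (u : ι → ℝ), u ≠ 0 → P *ᵥ u = μ • u → μ ≤ lam) (r : β → ℝ) :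
    quadForm (P ⊗ₖ (1 : Matrix β β ℝ)) (consensus r) ≤ Fintype.card ι * lam * (r ⬝ᵥ r) := by
  have hone : quadForm P 1 ≤ Fintype.card ι * lam := by
    simpa [mul_comm lam] using quadForm_le_of_eigenvalue_le hP hlam 1
  rw [quadForm_kronecker_one_consensus]
  exact mul_le_mul_of_nonneg_right hone (dotProduct_self_star_nonneg r)

end Consensus

section Cone

variable {N m p : ℕ}

/-- Membership in the polar cone `K°`: inequality blocks are nonpositive, equality blocks vanish. -/
def memKpolar (s : Idx N m p → ℝ) : Prop :=
  (∀ i j, s (i, Sum.inl j) ≤ 0) ∧ ∀ i j, s (i, Sum.inr j) = 0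

/-- The aggregated residual `s` satisfies the coupled constraints: the inequality part is
nonpositive and the equality part vanishes. -/
def IsFeasible (s : Blk m p → ℝ) : Prop :=
  (∀ j, s (Sum.inl j) ≤ 0) ∧ ∀ j, s (Sum.inr j) = 0

/-- The constraint violation of the aggregated residual `s = (μ, λ)`, which is the Euclidean norm
of `([μ]₊, λ)`. -/
noncomputable def violation (s : Blk m p → ℝ) : ℝ :=
  √(∑ j, max (s (Sum.inl j)) 0 ^ 2 + ∑ j, s (Sum.inr j) ^ 2)

theorem IsFeasible.add {s t : Blk m p → ℝ} (hs : IsFeasible s) (ht : IsFeasible t) :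
    IsFeasible (s + t) :=
  ⟨fun j => add_nonpos (hs.1 j) (ht.1 j), fun j => by simp [hs.2 j, ht.2 j]⟩

theorem IsFeasible.smul {s : Blk m p → ℝ} (hs : IsFeasible s) {t : ℝ} (ht : 0 ≤ t) :
    IsFeasible (t • s) :=
  ⟨fun j => mul_nonpos_of_nonneg_of_nonpos ht (hs.1 j), fun j => by simp [hs.2 j]⟩

theorem IsFeasible.violation_le {s t : Blk m p → ℝ} (h : IsFeasible (s - t)) :
    violation s ≤ √(t ⬝ᵥ t) := by
  refine Real.sqrt_le_sqrt ?_
  simp only [dotProduct, Fintype.sum_sum_type, ← sq]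
  refine add_le_add (Finset.sum_le_sum fun j _ => ?_) (Finset.sum_le_sum fun j _ => ?_)
  · have hle : s (Sum.inl j) ≤ t (Sum.inl j) := sub_nonpos.1 (h.1 j)
    rw [← sq_abs (t _)]
    gcongr
    exact max_le (hle.trans (le_abs_self _)) (abs_nonneg _)
  · rw [sub_eq_zero.1 (h.2 j)]

theorem memKpolar.isFeasible_agentSum {s : Idx N m p → ℝ} (hs : memKpolar s) :
    IsFeasible (agentSum s) :=
  ⟨fun j => (agentSum_apply s _).trans_le (Finset.sum_nonpos fun i _ => hs.1 i j),
    fun j => (agentSum_apply s _).trans (Finset.sum_eq_zero fun i _ => hs.2 i j)⟩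

theorem memKpolar_of_isFeasible_agentSum {s : Idx N m p → ℝ} (hs : ∃ r, s = consensus r)
    (h : IsFeasible (agentSum s)) : memKpolar s := by
  obtain ⟨r, rfl⟩ := hs
  rw [agentSum_consensus, Fintype.card_fin] at h
  have hN (i : Fin N) : (0 : ℝ) < N := by exact_mod_cast i.pos
  exact ⟨fun i j => nonpos_of_mul_nonpos_right (h.1 j) (hN i),
    fun i j => (mul_eq_zero.1 (h.2 j)).resolve_left (hN i).ne'⟩

theorem dotProduct_nonpos_of_memK {y s : Idx N m p → ℝ} (hy : memK y) (hs : memKpolar s) :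
    y ⬝ᵥ s ≤ 0 := by
  refine Finset.sum_nonpos ?_
  rintro ⟨i, j | j⟩ -
  · exact mul_nonpos_of_nonneg_of_nonpos (hy i j) (hs.1 i j)
  · rw [hs.2, mul_zero]

theorem memK_projK (a : Idx N m p → ℝ) : memK (projK a) := fun _ _ => le_max_right _ _

theorem memKpolar_projKpolar (a : Idx N m p → ℝ) : memKpolar (projKpolar a) :=
  ⟨fun _ _ => min_le_right _ _, fun _ _ => rfl⟩

theorem projK_add_projKpolar (a : Idx N m p → ℝ) : projK a + projKpolar a = a := by
  ext ⟨i, j | j⟩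
  · simp only [Pi.add_apply, projK, projKpolar, max_add_min, add_zero]
  · simp only [Pi.add_apply, projK, projKpolar, add_zero]

variable {η : Idx N m p → ℝ}

theorem projK_diagonal_mulVec (hη : ∀ e, 0 ≤ η e) (a : Idx N m p → ℝ) :
    projK (diagonal η *ᵥ a) = diagonal η *ᵥ projK a := by
  ext ⟨i, j | j⟩
  · simp only [projK, mulVec_diagonal, mul_max_of_nonneg _ _ (hη _), mul_zero]
  · simp only [projK, mulVec_diagonal]

theorem diagonal_mulVec_projK_dotProduct_projKpolar (η a : Idx N m p → ℝ) :
    diagonal η *ᵥ projK a ⬝ᵥ projKpolar a = 0 := by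
  refine Finset.sum_eq_zero ?_
  rintro ⟨i, j | j⟩ -
  · have hmul : max (a (i, Sum.inl j)) 0 * min (a (i, Sum.inl j)) 0 = 0 := by
      rw [max_mul_min, mul_zero]
    simp only [projK, projKpolar, mulVec_diagonal, mul_assoc, hmul, mul_zero]
  · exact mul_zero _

theorem quadForm_diagonal_projK_le (hη : ∀ e, 0 ≤ η e) {a b s : Idx N m p → ℝ}
    (h : memKpolar (b - (a + s))) :
    quadForm (diagonal η) (projK b) ≤ quadForm (diagonal η) (projK a + s) := by
  have hquad (u : Idx N m p → ℝ) : quadForm (diagonal η) u = ∑ e, η e * u e ^ 2 :=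
    Finset.sum_congr rfl fun e _ => by rw [mulVec_diagonal]; ring
  rw [hquad, hquad]
  refine Finset.sum_le_sum fun e _ => mul_le_mul_of_nonneg_left ?_ (hη e)
  obtain ⟨i, j | j⟩ := e
  · have hle : b (i, Sum.inl j) ≤ projK a (i, Sum.inl j) + s (i, Sum.inl j) :=
      (sub_nonpos.1 (h.1 i j)).trans (add_le_add_left (le_max_left _ _) _)
    rw [← sq_abs ((projK a + s) _)]
    exact pow_le_pow_left₀ (le_max_right _ _)
      (max_le (hle.trans (le_abs_self _)) (abs_nonneg _)) 2
  · exact (congrArg (· ^ 2) (sub_eq_zero.1 (h.2 i j))).le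

theorem exists_inv_eq_diagonal {n : Type*} [Fintype n] [DecidableEq n] {D : Matrix n n ℝ}
    (hdiag : D.IsDiag) (hpos : D.PosDef) : ∃ η : n → ℝ, (∀ e, 0 ≤ η e) ∧ D⁻¹ = diagonal η := by
  refine ⟨D⁻¹.diag, fun e => hpos.inv.posSemidef.diag_nonneg, ?_⟩
  rw [← hdiag.diagonal_diag, inv_diagonal, diag_diagonal]

end Cone

section Proximal

variable {E : Type*} [AddCommGroup E] [Module ℝ E] {X : Set E}

theorem nonneg_of_forall_mul_add_sq_mul_nonneg {b c : ℝ}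
    (h : ∀ t ∈ Set.Ioc (0 : ℝ) 1, 0 ≤ t * b + t ^ 2 * c) : 0 ≤ b := by
  have hlim : Filter.Tendsto (fun t : ℝ => b + t * c) (nhdsWithin 0 (Set.Ioi 0)) (nhds b) := by
    have hcont : ContinuousAt (fun t : ℝ => b + t * c) 0 := by fun_prop
    simpa [ContinuousAt] using hcont.tendsto.mono_left nhdsWithin_le_nhds
  refine ge_of_tendsto hlim ?_
  filter_upwards [Ioc_mem_nhdsGT (zero_lt_one (α := ℝ))] with t ht
  exact nonneg_of_mul_nonneg_right ((h t ht).trans_eq (by ring)) ht.1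

theorem le_of_isMinOn_add_quadraticForm {F Ψ : E → ℝ} {q : QuadraticForm ℝ E} {x₀ x₁ w : E}
    {b c : ℝ} (hF : ConvexOn ℝ X F) (hx₁ : x₁ ∈ X) (hw : w ∈ X)
    (hΨ : ∀ t ∈ Set.Ioc (0 : ℝ) 1, Ψ ((1 - t) • x₁ + t • w) ≤ Ψ x₁ + t * b + t ^ 2 * c)
    (hmin : IsMinOn (fun u => F u + Ψ u + 1 / 2 * q (u - x₀)) X x₁) :
    F x₁ + 1 / 2 * (q (x₁ - x₀) + q (w - x₁) - q (w - x₀)) ≤ F w + b := by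
  have hq (t : ℝ) : q ((1 - t) • x₁ + t • w - x₀) =
      q (x₁ - x₀) + t ^ 2 * q (w - x₁) + t * QuadraticMap.polar q (x₁ - x₀) (w - x₁) := by
    rw [show (1 - t) • x₁ + t • w - x₀ = (x₁ - x₀) + t • (w - x₁) by module,
      QuadraticMap.map_add q, QuadraticMap.map_smul, QuadraticMap.polar_smul_right]
    simp only [smul_eq_mul, sq]
  have hq_one : q (w - x₀) = q (x₁ - x₀) + q (w - x₁) +
      QuadraticMap.polar q (x₁ - x₀) (w - x₁) := by
    simpa using hq 1
  have hfirst : 0 ≤ F w - F x₁ + b + 1 / 2 * QuadraticMap.polar q (x₁ - x₀) (w - x₁) := by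
    refine nonneg_of_forall_mul_add_sq_mul_nonneg (c := c + 1 / 2 * q (w - x₁)) fun t ht => ?_
    have hconv := hF.2 hx₁ hw (sub_nonneg.2 ht.2) ht.1.le (sub_add_cancel 1 t)
    have hle := isMinOn_iff.1 hmin _ (hF.1 hx₁ hw (sub_nonneg.2 ht.2) ht.1.le (sub_add_cancel 1 t))
    simp only [hq] at hle
    simp only [smul_eq_mul] at hconv
    linarith [hΨ t ht]
  linarith

end Proximal

section ConvexProgram

variable {N m p : ℕ} {E : Type*} [AddCommGroup E] [Module ℝ E]

/-- A convex program on `X` with objective `F` and stacked constraint map `G`: all components are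
convex, and those of the equality constraints are also concave, hence affine on `X`. -/
structure IsConvexProgram (X : Set E) (F : E → ℝ) (G : E → Idx N m p → ℝ) : Prop where
  objective : ConvexOn ℝ X F
  constraint : ∀ e, ConvexOn ℝ X fun w => G w e
  equality : ∀ i j, ConcaveOn ℝ X fun w => G w (i, Sum.inr j)

namespace IsConvexProgram

variable {X : Set E} {F : E → ℝ} {G : E → Idx N m p → ℝ}

theorem memKpolar_map_sum_sub (h : IsConvexProgram X F G) {κ : Type*} {t : Finset κ} {a : κ → ℝ}
    {u : κ → E} (ha : ∀ l ∈ t, 0 ≤ a l) (hsum : ∑ l ∈ t, a l = 1) (hu : ∀ l ∈ t, u l ∈ X) :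
    memKpolar (G (∑ l ∈ t, a l • u l) - ∑ l ∈ t, a l • G (u l)) := by
  have hconvex (e) : G (∑ l ∈ t, a l • u l) e ≤ (∑ l ∈ t, a l • G (u l)) e := by
    simpa using (h.constraint e).map_sum_le ha hsum hu
  have hconcave (i j) : (∑ l ∈ t, a l • G (u l)) (i, Sum.inr j) ≤
      G (∑ l ∈ t, a l • u l) (i, Sum.inr j) := by
    simpa using (h.equality i j).le_map_sum ha hsum hu
  exact ⟨fun i j => sub_nonpos.2 (hconvex _),
    fun i j => sub_eq_zero.2 ((hconvex _).antisymm (hconcave i j))⟩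

theorem memKpolar_map_segment_sub (h : IsConvexProgram X F G) {x₁ w : E} (hx₁ : x₁ ∈ X)
    (hw : w ∈ X) {t : ℝ} (ht : t ∈ Set.Ioc (0 : ℝ) 1) :
    memKpolar (G ((1 - t) • x₁ + t • w) - ((1 - t) • G x₁ + t • G w)) := by
  have hjensen := h.memKpolar_map_sum_sub (t := Finset.univ) (a := ![1 - t, t]) (u := ![x₁, w])
    (by simp [Fin.forall_fin_two, ht.1.le, ht.2]) (by simp) (by simp [Fin.forall_fin_two, hx₁, hw])
  simpa using hjensen

theorem memKpolar_map_average_sub (h : IsConvexProgram X F G) {u : ℕ → E} (hu : ∀ l, u l ∈ X)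
    {k : ℕ} (hk : 1 ≤ k) :
    memKpolar (G ((k : ℝ)⁻¹ • ∑ l ∈ Finset.range k, u l) -
      (k : ℝ)⁻¹ • ∑ l ∈ Finset.range k, G (u l)) := by
  have hk₀ : (k : ℝ) ≠ 0 := by exact_mod_cast (by lia : k ≠ 0)
  simpa only [Finset.smul_sum] using
    h.memKpolar_map_sum_sub (t := Finset.range k) (a := fun _ => (k : ℝ)⁻¹)
      (fun _ _ => by positivity) (by simp [hk₀]) (fun l _ => hu l)

theorem of_separable {E : Fin N → Type*} [∀ i, AddCommGroup (E i)] [∀ i, Module ℝ (E i)]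
    {X : ∀ i, Set (E i)} {f : ∀ i, E i → ℝ} {g : ∀ i, E i → Fin m → ℝ}
    {ℓ : ∀ i, E i →ₗ[ℝ] (Fin p → ℝ)} {c : Fin N → Fin p → ℝ} {F : (∀ i, E i) → ℝ}
    {G : (∀ i, E i) → Idx N m p → ℝ} (hX : ∀ i, Convex ℝ (X i))
    (hf : ∀ i, ConvexOn ℝ (X i) (f i)) (hg : ∀ i j, ConvexOn ℝ (X i) fun w => g i w j)
    (hF : ∀ w, F w = ∑ i, f i (w i)) (hG_inl : ∀ w i j, G w (i, Sum.inl j) = g i (w i) j)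
    (hG_inr : ∀ w i j, G w (i, Sum.inr j) = (ℓ i (w i) + c i) j) :
    IsConvexProgram (Set.univ.pi X) F G := by
  have hXpi : Convex ℝ (Set.univ.pi X) := convex_pi fun i _ => hX i
  have hlift {i : Fin N} {φ : E i → ℝ} (hφ : ConvexOn ℝ (X i) φ) :
      ConvexOn ℝ (Set.univ.pi X) fun w => φ (w i) :=
    (hφ.comp_linearMap (LinearMap.proj i)).subset (fun w hw => hw i trivial) hXpi
  let ψ (i : Fin N) (j : Fin p) : (∀ i, E i) →ₗ[ℝ] ℝ :=
    LinearMap.proj j ∘ₗ ℓ i ∘ₗ LinearMap.proj i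
  refine ⟨?_, ?_, fun i j => ?_⟩
  · have hF_sum : F = ∑ i, fun w => f i (w i) := by ext w; rw [hF, Finset.sum_apply]
    rw [hF_sum]
    exact Finset.sum_induction _ (ConvexOn ℝ (Set.univ.pi X)) (fun _ _ => ConvexOn.add)
      (convexOn_const 0 hXpi) fun i _ => hlift (hf i)
  · rintro ⟨i, j | j⟩
    · simpa only [hG_inl] using hlift (hg i j)
    · simp only [hG_inr]
      exact ((ψ i j).convexOn hXpi).add_const (c i j)
  · simp only [hG_inr]
    exact ((ψ i j).concaveOn hXpi).add_const (c i j)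

end IsConvexProgram

end ConvexProgram

section GeneralizedInverse

variable {n : Type*} [Fintype n] {M Md : Matrix n n ℝ} {u : n → ℝ}

theorem quadForm_generalizedInverse_mulVec (hM : M.IsSymm) (hMd : M * Md * M = M) (t : n → ℝ) :
    quadForm Md (M *ᵥ t) = quadForm M t := by
  rw [quadForm, dotProduct_comm, dotProduct_mulVec_comm_of_isSymm hM, mulVec_mulVec, mulVec_mulVec,
    hMd, quadForm]

theorem quadForm_generalizedInverse_nonneg (hM : M.PosSemidef) (hMd : M * Md * M = M)
    (hu : u ∈ LinearMap.range M.mulVecLin) : 0 ≤ quadForm Md u := by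
  obtain ⟨t, rfl⟩ := hu
  rw [mulVecLin_apply, quadForm_generalizedInverse_mulVec (isHermitian_iff_isSymm.1 hM.1) hMd]
  exact quadForm_nonneg hM t

theorem quadForm_generalizedInverse_add_le (hM : M.PosSemidef) (hMd : M * Md * M = M)
    (hu : u ∈ LinearMap.range M.mulVecLin) (ρ : ℝ) (y : n → ℝ) :
    quadForm Md (u + ρ • M *ᵥ y) ≤
      quadForm Md u + 2 * ρ * (y ⬝ᵥ (u + ρ • M *ᵥ y)) := by
  have hsymm := isHermitian_iff_isSymm.1 hM.1
  obtain ⟨t, rfl⟩ := hu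
  have hthree := quadForm_sub_quadForm_le hM (t + ρ • y) t
  rw [add_sub_cancel_left, mulVec_smul, dotProduct_smul, dotProduct_mulVec_comm_of_isSymm hsymm,
    smul_eq_mul] at hthree
  rw [mulVecLin_apply, ← mulVec_smul, ← mulVec_add,
    quadForm_generalizedInverse_mulVec hsymm hMd, quadForm_generalizedInverse_mulVec hsymm hMd]
  linarith

variable [DecidableEq n]

theorem IsMPInv.range_mulVecLin_le (hM : M.IsSymm) (h : IsMPInv M Md) :
    LinearMap.range M.mulVecLin ≤ LinearMap.range (M * M).mulVecLin := by
  obtain ⟨hinner, -, -, hsymm⟩ := h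
  have hfactor : M = M * M * Mdᵀ := by
    rw [transpose_mul, hM.eq] at hsymm
    rw [Matrix.mul_assoc M M, hsymm, ← Matrix.mul_assoc, hinner]
  rintro - ⟨t, rfl⟩
  exact ⟨Mdᵀ *ᵥ t, by rw [mulVecLin_apply, mulVecLin_apply, mulVec_mulVec, ← hfactor]⟩

theorem IsMPInv.mul_self_mulVec_sub (hM : M.IsSymm) (h : IsMPInv M Md) (u : n → ℝ) :
    (M * M) *ᵥ (u - M *ᵥ Md *ᵥ u) = 0 := by
  have hprojection : M * (M * Md) = M := by
    have htranspose := congrArg transpose h.1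
    rwa [transpose_mul, hM.eq, h.2.2.1] at htranspose
  rw [mulVec_sub, mulVec_mulVec u, mulVec_mulVec, Matrix.mul_assoc, hprojection, sub_self]

end GeneralizedInverse

/-- Weight matrices of a consensus-based primal-dual method with penalty `ρ`: the metric `A + ρ H`
is diagonal and positive definite, `Ht` is dominated by `H`, `H` annihilates the consensus vectors,
and these are exactly the kernel of `Ht`. -/
structure IsConsensusWeighting {ι β : Type*} [Fintype ι] [Fintype β] (ρ : ℝ)
    (A H Ht : Matrix (ι × β) (ι × β) ℝ) : Prop where
  rho_pos : 0 < ρ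
  posSemidef_left : A.PosSemidef
  isDiag : (A + ρ • H).IsDiag
  posDef : (A + ρ • H).PosDef
  posSemidef_sub : (H - Ht).PosSemidef
  posSemidef_right : Ht.PosSemidef
  mulVec_consensus : ∀ r, H *ᵥ consensus r = 0
  mulVec_eq_zero_iff : ∀ w, Ht *ᵥ w = 0 ↔ ∃ r, w = consensus r

namespace IsConsensusWeighting

variable {ι β : Type*} [Fintype ι] [Fintype β] {ρ : ℝ} {A H Ht : Matrix (ι × β) (ι × β) ℝ}

theorem kronecker_one [DecidableEq β] {PA PH PHt : Matrix ι ι ℝ} (hρ : 0 < ρ)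
    (hPA : PA.PosSemidef) (hPHt : PHt.PosSemidef) (hdiag : (PA + ρ • PH).IsDiag)
    (hpos : (PA + ρ • PH).PosDef) (hsub : (PH - PHt).PosSemidef)
    (hPH_ker : ∀ u : ι → ℝ, PH *ᵥ u = 0 ↔ ∃ t : ℝ, u = fun _ => t)
    (hPHt_ker : ∀ u : ι → ℝ, PHt *ᵥ u = 0 ↔ ∃ t : ℝ, u = fun _ => t) :
    IsConsensusWeighting ρ (PA ⊗ₖ (1 : Matrix β β ℝ)) (PH ⊗ₖ 1) (PHt ⊗ₖ 1) := by
  have hmetric : PA ⊗ₖ (1 : Matrix β β ℝ) + ρ • PH ⊗ₖ 1 = (PA + ρ • PH) ⊗ₖ 1 := by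
    rw [add_kronecker, smul_kronecker]
  have hdifference : PH ⊗ₖ (1 : Matrix β β ℝ) - PHt ⊗ₖ 1 = (PH - PHt) ⊗ₖ 1 := by
    ext ⟨i, j⟩ ⟨i', j'⟩
    simp only [Matrix.sub_apply, kroneckerMap_apply, sub_mul]
  exact {
    rho_pos := hρ
    posSemidef_left := hPA.kronecker .one
    isDiag := hmetric ▸ hdiag.kronecker isDiag_one
    posDef := hmetric ▸ hpos.kronecker .one
    posSemidef_sub := hdifference ▸ hsub.kronecker .one
    posSemidef_right := hPHt.kronecker .one
    mulVec_consensus := fun r => (kronecker_one_mulVec_eq_zero_iff hPH_ker _).2 ⟨r, rfl⟩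
    mulVec_eq_zero_iff := kronecker_one_mulVec_eq_zero_iff hPHt_ker }

theorem isSymm_right (h : IsConsensusWeighting ρ A H Ht) : Ht.IsSymm :=
  isHermitian_iff_isSymm.1 h.posSemidef_right.1

theorem isSymm (h : IsConsensusWeighting ρ A H Ht) : H.IsSymm := by
  simpa using (isHermitian_iff_isSymm.1 h.posSemidef_sub.1).add h.isSymm_right

theorem agentSum_mulVec (h : IsConsensusWeighting ρ A H Ht) (w : ι × β → ℝ) :
    agentSum (H *ᵥ w) = 0 :=
  agentSum_mulVec_eq_zero h.isSymm h.mulVec_consensus w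

theorem agentSum_eq_zero_of_mem_range (h : IsConsensusWeighting ρ A H Ht) {u : ι × β → ℝ}
    (hu : u ∈ LinearMap.range Ht.mulVecLin) : agentSum u = 0 := by
  obtain ⟨w, rfl⟩ := hu
  exact agentSum_mulVec_eq_zero h.isSymm_right (fun r => (h.mulVec_eq_zero_iff _).2 ⟨r, rfl⟩) w

theorem quadForm_right_le (h : IsConsensusWeighting ρ A H Ht) (w : ι × β → ℝ) :
    quadForm Ht w ≤ quadForm H w := by
  have hnonneg := quadForm_nonneg h.posSemidef_sub w
  rwa [quadForm, sub_mulVec, dotProduct_sub, sub_nonneg] at hnonneg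

end IsConsensusWeighting

section Iteration

variable {N m p : ℕ} {E : Type*} {X : Set E} {F : E → ℝ} {G : E → Idx N m p → ℝ} {ρ : ℝ}
  {A H Ht Htd : Matrix (Idx N m p) (Idx N m p) ℝ} {xs : E} {r : Blk m p → ℝ}
  {vs : Idx N m p → ℝ}

/-- A saddle point of the Lagrangian of `min F` over `X` subject to the coupled constraints
`agentSum ∘ G`: a feasible minimizer `xs` of the Lagrangian with multiplier `r = (μ, λ)`, `0 ≤ μ`.
Complementary slackness is absorbed by leaving the term `r ⬝ᵥ agentSum (G xs)` out of
`le_lagrangian`. -/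
structure IsSaddlePoint (X : Set E) (F : E → ℝ) (G : E → Idx N m p → ℝ) (xs : E)
    (r : Blk m p → ℝ) : Prop where
  mem : xs ∈ X
  isFeasible : IsFeasible (agentSum (G xs))
  multiplier_nonneg : ∀ j, 0 ≤ r (Sum.inl j)
  le_lagrangian : ∀ w ∈ X, F xs ≤ F w + r ⬝ᵥ agentSum (G w)

theorem IsSaddlePoint.of_complementarySlackness {μ : Fin m → ℝ} {lam : Fin p → ℝ} (hxs : xs ∈ X)
    (hineq : ∀ j, ∑ i, G xs (i, Sum.inl j) ≤ 0) (heq : ∀ j, ∑ i, G xs (i, Sum.inr j) = 0)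
    (hμ : ∀ j, 0 ≤ μ j) (hslack : ∑ j, μ j * ∑ i, G xs (i, Sum.inl j) = 0)
    (hmin : ∀ w ∈ X,
      F xs + ∑ j, μ j * ∑ i, G xs (i, Sum.inl j) + ∑ j, lam j * ∑ i, G xs (i, Sum.inr j) ≤
        F w + ∑ j, μ j * ∑ i, G w (i, Sum.inl j) + ∑ j, lam j * ∑ i, G w (i, Sum.inr j)) :
    IsSaddlePoint X F G xs (Sum.elim μ lam) := by
  refine ⟨hxs, by simpa only [IsFeasible, agentSum_apply] using ⟨hineq, heq⟩, hμ, fun w hw => ?_⟩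
  have hle := hmin w hw
  simp only [hslack, heq, mul_zero, Finset.sum_const_zero, add_zero] at hle
  simpa only [dotProduct, Fintype.sum_sum_type, Sum.elim_inl, Sum.elim_inr, agentSum_apply,
    add_assoc] using hle

theorem IsSaddlePoint.memKpolar_sub (hsaddle : IsSaddlePoint X F G xs r)
    (hwt : IsConsensusWeighting ρ A H Ht) (hvs : vs ∈ LinearMap.range Ht.mulVecLin)
    (hvs_sub : Ht *ᵥ (G xs - vs) = 0) : memKpolar (G xs - vs) := by
  refine memKpolar_of_isFeasible_agentSum ((hwt.mulVec_eq_zero_iff _).1 hvs_sub) ?_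
  rw [map_sub, hwt.agentSum_eq_zero_of_mem_range hvs, sub_zero]
  exact hsaddle.isFeasible

/-- The point whose projections onto `K` and `K°` produce `y^{k+1}` and `-σ^{k+1}`, with the dual
variable written as `v = H̃^{1/2} z`. -/
def dualPoint (A : Matrix (Idx N m p) (Idx N m p) ℝ) (G : E → Idx N m p → ℝ) (x : ℕ → E)
    (y v : ℕ → Idx N m p → ℝ) (k : ℕ) : Idx N m p → ℝ :=
  A *ᵥ y k - v k + G (x (k + 1))

variable [AddCommGroup E] [Module ℝ E]

/-- The Pro-DUCA iteration in the variables `(x, y, v)` with `v = H̃^{1/2} z`, which eliminates the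
square root of `Ht`. The proximal term is an arbitrary quadratic form `q`; the paper has
`q = α‖·‖²`. -/
structure IsProDUCA (X : Set E) (F : E → ℝ) (G : E → Idx N m p → ℝ) (q : QuadraticForm ℝ E)
    (ρ : ℝ) (A H Ht : Matrix (Idx N m p) (Idx N m p) ℝ) (x : ℕ → E)
    (y v : ℕ → Idx N m p → ℝ) : Prop where
  mem : ∀ k, x (k + 1) ∈ X
  isMinOn : ∀ k, IsMinOn (fun w => F w +
    1 / 2 * quadForm (A + ρ • H)⁻¹ (projK (A *ᵥ y k - v k + G w)) + 1 / 2 * q (w - x k)) X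
      (x (k + 1))
  y_succ : ∀ k, y (k + 1) = projK ((A + ρ • H)⁻¹ *ᵥ dualPoint A G x y v k)
  v_succ : ∀ k, v (k + 1) = v k + ρ • Ht *ᵥ y (k + 1)

/-- The Lyapunov function of Pro-DUCA, the squared distance of the `k`-th iterate to `(xs, ys, vs)`
in the metric of the algorithm. -/
noncomputable def lyapunov (q : QuadraticForm ℝ E) (ρ : ℝ)
    (A Htd : Matrix (Idx N m p) (Idx N m p) ℝ) (xs : E) (ys vs : Idx N m p → ℝ) (x : ℕ → E)
    (y v : ℕ → Idx N m p → ℝ) (k : ℕ) : ℝ :=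
  quadForm A (y k - ys) + q (x k - xs) + 1 / ρ * quadForm Htd (v k - vs)

namespace IsProDUCA

variable {q : QuadraticForm ℝ E} {x : ℕ → E} {y v : ℕ → Idx N m p → ℝ}

theorem y_succ_eq (hit : IsProDUCA X F G q ρ A H Ht x y v)
    (hwt : IsConsensusWeighting ρ A H Ht) (k : ℕ) :
    y (k + 1) = (A + ρ • H)⁻¹ *ᵥ projK (dualPoint A G x y v k) := by
  obtain ⟨η, hη, hinv⟩ := exists_inv_eq_diagonal hwt.isDiag hwt.posDef
  rw [hit.y_succ, hinv, projK_diagonal_mulVec hη]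

theorem memK_y_succ (hit : IsProDUCA X F G q ρ A H Ht x y v) (k : ℕ) : memK (y (k + 1)) := by
  rw [hit.y_succ]
  exact memK_projK _

theorem y_succ_dotProduct_projKpolar (hit : IsProDUCA X F G q ρ A H Ht x y v)
    (hwt : IsConsensusWeighting ρ A H Ht) (k : ℕ) :
    y (k + 1) ⬝ᵥ projKpolar (dualPoint A G x y v k) = 0 := by
  obtain ⟨η, -, hinv⟩ := exists_inv_eq_diagonal hwt.isDiag hwt.posDef
  rw [hit.y_succ_eq hwt, hinv, diagonal_mulVec_projK_dotProduct_projKpolar]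

theorem constraint_eq (hit : IsProDUCA X F G q ρ A H Ht x y v)
    (hwt : IsConsensusWeighting ρ A H Ht) (k : ℕ) :
    G (x (k + 1)) = A *ᵥ (y (k + 1) - y k) + ρ • H *ᵥ y (k + 1) + v k +
      projKpolar (dualPoint A G x y v k) := by
  have hunit : IsUnit (A + ρ • H).det := (isUnit_iff_isUnit_det _).1 hwt.posDef.isUnit
  have hmetric : A *ᵥ y (k + 1) + ρ • H *ᵥ y (k + 1) = projK (dualPoint A G x y v k) := by
    rw [← smul_mulVec, ← add_mulVec, hit.y_succ_eq hwt, mulVec_mulVec, mul_nonsing_inv _ hunit,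
      one_mulVec]
  have hmoreau := projK_add_projKpolar (dualPoint A G x y v k)
  rw [← hmetric, dualPoint] at hmoreau
  rw [mulVec_sub, dualPoint]
  linear_combination -hmoreau

theorem v_mem_range (hit : IsProDUCA X F G q ρ A H Ht x y v)
    (hv : v 0 ∈ LinearMap.range Ht.mulVecLin) (k : ℕ) : v k ∈ LinearMap.range Ht.mulVecLin := by
  induction k with
  | zero => exact hv
  | succ k ih =>
    rw [hit.v_succ]
    exact add_mem ih (Submodule.smul_mem _ _ ⟨_, rfl⟩)

theorem objective_add_prox_le (hit : IsProDUCA X F G q ρ A H Ht x y v)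
    (hwt : IsConsensusWeighting ρ A H Ht) (hprog : IsConvexProgram X F G) {w : E} (hw : w ∈ X)
    (k : ℕ) :
    F (x (k + 1)) + 1 / 2 * (q (x (k + 1) - x k) + q (w - x (k + 1)) - q (w - x k)) ≤
      F w + y (k + 1) ⬝ᵥ (G w - G (x (k + 1))) := by
  obtain ⟨η, hη, hinv⟩ := exists_inv_eq_diagonal hwt.isDiag hwt.posDef
  refine le_of_isMinOn_add_quadraticForm hprog.objective (hit.mem k) hw
    (c := 1 / 2 * quadForm (A + ρ • H)⁻¹ (G w - G (x (k + 1)))) (fun t ht => ?_) (hit.isMinOn k)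
  have hpolar : memKpolar (A *ᵥ y k - v k + G ((1 - t) • x (k + 1) + t • w) -
      (dualPoint A G x y v k + t • (G w - G (x (k + 1))))) := by
    convert hprog.memKpolar_map_segment_sub (hit.mem k) hw ht using 1
    rw [dualPoint]
    module
  have hdescent := quadForm_diagonal_projK_le hη hpolar
  rw [quadForm_add_smul (isSymm_diagonal η), ← hinv, ← hit.y_succ_eq hwt, dualPoint] at hdescent
  linarith

theorem sub_consensus_dotProduct_constraint_ge (hit : IsProDUCA X F G q ρ A H Ht x y v)
    (hwt : IsConsensusWeighting ρ A H Ht) (hr : ∀ j, 0 ≤ r (Sum.inl j))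
    (hv : v 0 ∈ LinearMap.range Ht.mulVecLin) (k : ℕ) :
    (y (k + 1) - consensus r) ⬝ᵥ A *ᵥ (y (k + 1) - y k) + ρ * quadForm Ht (y (k + 1)) +
      y (k + 1) ⬝ᵥ v k ≤ (y (k + 1) - consensus r) ⬝ᵥ G (x (k + 1)) := by
  have hH : consensus r ⬝ᵥ H *ᵥ y (k + 1) = 0 := by
    rw [consensus_dotProduct, hwt.agentSum_mulVec, dotProduct_zero]
  have hvk : consensus r ⬝ᵥ v k = 0 := by
    rw [consensus_dotProduct, hwt.agentSum_eq_zero_of_mem_range (hit.v_mem_range hv k),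
      dotProduct_zero]
  have hpolar : consensus r ⬝ᵥ projKpolar (dualPoint A G x y v k) ≤ 0 :=
    dotProduct_nonpos_of_memK (fun _ => hr) (memKpolar_projKpolar _)
  have hdominated : ρ * quadForm Ht (y (k + 1)) ≤ ρ * (y (k + 1) ⬝ᵥ H *ᵥ y (k + 1)) :=
    mul_le_mul_of_nonneg_left (hwt.quadForm_right_le _) hwt.rho_pos.le
  have hexpand := hit.constraint_eq hwt k
  simp only [hexpand, dotProduct_add, sub_dotProduct, dotProduct_smul, smul_eq_mul, hH, hvk,
    hit.y_succ_dotProduct_projKpolar hwt]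
  linarith

theorem of_sqrt {R : Matrix (Idx N m p) (Idx N m p) ℝ} {z : ℕ → Idx N m p → ℝ} (hR : R * R = Ht)
    (hmem : ∀ k, x (k + 1) ∈ X)
    (hmin : ∀ k, IsMinOn (fun w => F w +
      1 / 2 * quadForm (A + ρ • H)⁻¹ (projK (A *ᵥ y k - R *ᵥ z k + G w)) + 1 / 2 * q (w - x k)) X
        (x (k + 1)))
    (hy : ∀ k, y (k + 1) = projK ((A + ρ • H)⁻¹ *ᵥ (A *ᵥ y k - R *ᵥ z k + G (x (k + 1)))))
    (hz : ∀ k, z (k + 1) = z k + ρ • R *ᵥ y (k + 1)) :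
    IsProDUCA X F G q ρ A H Ht x y fun k => R *ᵥ z k :=
  ⟨hmem, hmin, hy, fun k => by rw [hz, mulVec_add, mulVec_smul, mulVec_mulVec, hR]⟩

theorem lagrangian_gap_le (hit : IsProDUCA X F G q ρ A H Ht x y v)
    (hwt : IsConsensusWeighting ρ A H Ht) (hprog : IsConvexProgram X F G)
    (hsaddle : IsSaddlePoint X F G xs r) (hvs : vs ∈ LinearMap.range Ht.mulVecLin)
    (hvs_sub : Ht *ᵥ (G xs - vs) = 0) (k : ℕ) :
    (y (k + 1) - consensus r) ⬝ᵥ G (x (k + 1)) +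
      1 / 2 * (q (x (k + 1) - x k) + q (x (k + 1) - xs) - q (x k - xs)) ≤ y (k + 1) ⬝ᵥ vs := by
  have hprox := hit.objective_add_prox_le hwt hprog hsaddle.mem k
  rw [QuadraticMap.map_sub q xs, QuadraticMap.map_sub q xs] at hprox
  have hlagrangian := hsaddle.le_lagrangian _ (hit.mem k)
  rw [← consensus_dotProduct] at hlagrangian
  have hpolar := dotProduct_nonpos_of_memK (hit.memK_y_succ k)
    (hsaddle.memKpolar_sub hwt hvs hvs_sub)
  rw [dotProduct_sub] at hprox hpolar
  rw [sub_dotProduct]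
  linarith

theorem lyapunov_succ_le (hit : IsProDUCA X F G q ρ A H Ht x y v)
    (hwt : IsConsensusWeighting ρ A H Ht) (hprog : IsConvexProgram X F G)
    (hsaddle : IsSaddlePoint X F G xs r) (hq : ∀ u, 0 ≤ q u) (hHtd : Ht * Htd * Ht = Ht)
    (hv : v 0 ∈ LinearMap.range Ht.mulVecLin) (hvs : vs ∈ LinearMap.range Ht.mulVecLin)
    (hvs_sub : Ht *ᵥ (G xs - vs) = 0) (k : ℕ) :
    lyapunov q ρ A Htd xs (consensus r) vs x y v (k + 1) ≤
      lyapunov q ρ A Htd xs (consensus r) vs x y v k := by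
  have hgap := hit.lagrangian_gap_le hwt hprog hsaddle hvs hvs_sub k
  have hconstraint := hit.sub_consensus_dotProduct_constraint_ge hwt hsaddle.multiplier_nonneg hv k
  have hprimal := hq (x (k + 1) - x k)
  have hdual := quadForm_sub_quadForm_le hwt.posSemidef_left (y (k + 1) - consensus r)
    (y k - consensus r)
  rw [sub_sub_sub_cancel_right] at hdual
  have htracking : 1 / ρ * quadForm Htd (v (k + 1) - vs) ≤ 1 / ρ * quadForm Htd (v k - vs) +
      2 * (y (k + 1) ⬝ᵥ v k + ρ * quadForm Ht (y (k + 1)) - y (k + 1) ⬝ᵥ vs) := by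
    have hstep := quadForm_generalizedInverse_add_le hwt.posSemidef_right hHtd
      (sub_mem (hit.v_mem_range hv k) hvs) ρ (y (k + 1))
    rw [sub_add_eq_add_sub, ← hit.v_succ] at hstep
    have hinner : y (k + 1) ⬝ᵥ (v (k + 1) - vs) =
        y (k + 1) ⬝ᵥ v k + ρ * quadForm Ht (y (k + 1)) - y (k + 1) ⬝ᵥ vs := by
      rw [hit.v_succ, dotProduct_sub, dotProduct_add, dotProduct_smul, smul_eq_mul, quadForm]
    have hρ := hwt.rho_pos
    rw [hinner] at hstep
    calc 1 / ρ * quadForm Htd (v (k + 1) - vs)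
      _ ≤ 1 / ρ * _ := mul_le_mul_of_nonneg_left hstep (by positivity)
      _ = _ := by field_simp
  simp only [lyapunov]
  linarith

theorem sqrt_quadForm_sub_consensus_le (hit : IsProDUCA X F G q ρ A H Ht x y v)
    (hwt : IsConsensusWeighting ρ A H Ht) (hprog : IsConvexProgram X F G)
    (hsaddle : IsSaddlePoint X F G xs r) (hq : ∀ u, 0 ≤ q u) (hHtd : Ht * Htd * Ht = Ht)
    (hv : v 0 ∈ LinearMap.range Ht.mulVecLin) (hvs : vs ∈ LinearMap.range Ht.mulVecLin)
    (hvs_sub : Ht *ᵥ (G xs - vs) = 0) (k : ℕ) :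
    √(quadForm A (y k - consensus r)) ≤
      √(lyapunov q ρ A Htd xs (consensus r) vs x y v 0) := by
  have hantitone := antitone_nat_of_succ_le
    (hit.lyapunov_succ_le hwt hprog hsaddle hq hHtd hv hvs hvs_sub)
  refine Real.sqrt_le_sqrt (le_trans ?_ (hantitone k.zero_le))
  have hprimal := hq (x k - xs)
  have htracking := mul_nonneg (one_div_nonneg.2 hwt.rho_pos.le)
    (quadForm_generalizedInverse_nonneg hwt.posSemidef_right hHtd
      (sub_mem (hit.v_mem_range hv k) hvs))
  rw [lyapunov]
  linarith

theorem isFeasible_agentSum_sum_sub (hit : IsProDUCA X F G q ρ A H Ht x y v)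
    (hwt : IsConsensusWeighting ρ A H Ht) (hv : v 0 ∈ LinearMap.range Ht.mulVecLin) (k : ℕ) :
    IsFeasible (agentSum (∑ l ∈ Finset.range k, G (x (l + 1)) - A *ᵥ (y k - y 0))) := by
  induction k with
  | zero => simp [IsFeasible]
  | succ k ih =>
    have hsplit : agentSum (∑ l ∈ Finset.range (k + 1), G (x (l + 1)) - A *ᵥ (y (k + 1) - y 0)) =
        agentSum (∑ l ∈ Finset.range k, G (x (l + 1)) - A *ᵥ (y k - y 0)) +
          agentSum (projKpolar (dualPoint A G x y v k)) := by
      rw [Finset.sum_range_succ, hit.constraint_eq hwt k]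
      simp only [map_add, map_sub, map_smul, mulVec_sub, hwt.agentSum_mulVec,
        hwt.agentSum_eq_zero_of_mem_range (hit.v_mem_range hv k), smul_zero]
      abel
    rw [hsplit]
    exact ih.add (memKpolar_projKpolar _).isFeasible_agentSum

theorem violation_average_le (hit : IsProDUCA X F G q ρ A H Ht x y v)
    (hwt : IsConsensusWeighting ρ A H Ht) (hprog : IsConvexProgram X F G) {L : ℝ}
    (hL : ∀ r, quadForm A (consensus r) ≤ L * (r ⬝ᵥ r))
    (hv : v 0 ∈ LinearMap.range Ht.mulVecLin) {k : ℕ} (hk : 1 ≤ k) :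
    violation (agentSum (G ((k : ℝ)⁻¹ • ∑ l ∈ Finset.Icc 1 k, x l))) ≤
      √L / k * √(quadForm A (y k - y 0)) := by
  have hshift : ∑ l ∈ Finset.Icc 1 k, x l = ∑ l ∈ Finset.range k, x (l + 1) := by
    rw [Finset.range_eq_Ico, Finset.sum_Ico_add' x 0 k 1]
    rfl
  rw [hshift]
  have hk₀ : (0 : ℝ) ≤ (k : ℝ)⁻¹ := by positivity
  have hjensen := (hprog.memKpolar_map_average_sub hit.mem hk).isFeasible_agentSum
  have htelescope := (hit.isFeasible_agentSum_sum_sub hwt hv k).smul hk₀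
  have hviolation := (show IsFeasible
      (agentSum (G ((k : ℝ)⁻¹ • ∑ l ∈ Finset.range k, x (l + 1))) -
        (k : ℝ)⁻¹ • agentSum (A *ᵥ (y k - y 0))) by
    convert hjensen.add htelescope using 1
    simp only [map_sub, map_smul]
    module).violation_le
  refine hviolation.trans ?_
  rw [smul_dotProduct, dotProduct_smul, smul_eq_mul, smul_eq_mul, ← mul_assoc,
    Real.sqrt_mul (mul_self_nonneg _), Real.sqrt_mul_self hk₀]
  refine (mul_le_mul_of_nonneg_left (sqrt_agentSum_mulVec_le hwt.posSemidef_left hL _)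
    hk₀).trans_eq (by ring)
end IsProDUCA

end Iteration

theorem stmt2_general {N m p : ℕ} {E : Type*} [AddCommGroup E] [Module ℝ E] {X : Set E} {F : E → ℝ}
    {G : E → Idx N m p → ℝ} {q : QuadraticForm ℝ E} {ρ : ℝ}
    {A H Ht Htd : Matrix (Idx N m p) (Idx N m p) ℝ} {x : ℕ → E} {y v : ℕ → Idx N m p → ℝ} {xs : E}
    {r : Blk m p → ℝ} {vs : Idx N m p → ℝ} {L C₁ C₂ : ℝ}
    (hit : IsProDUCA X F G q ρ A H Ht x y v) (hwt : IsConsensusWeighting ρ A H Ht)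
    (hprog : IsConvexProgram X F G) (hsaddle : IsSaddlePoint X F G xs r) (hq : ∀ u, 0 ≤ q u)
    (hL : ∀ r, quadForm A (consensus r) ≤ L * (r ⬝ᵥ r)) (hHtd : Ht * Htd * Ht = Ht)
    (hv : v 0 ∈ LinearMap.range Ht.mulVecLin) (hvs : vs ∈ LinearMap.range Ht.mulVecLin)
    (hvs_sub : Ht *ᵥ (G xs - vs) = 0) (hC₁ : C₁ = √L * √(r ⬝ᵥ r))
    (hC₂ : C₂ = √((√(quadForm A (y 0)) + C₁) ^ 2 + q (x 0 - xs) +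
      1 / ρ * quadForm Htd (v 0 - vs))) {k : ℕ} (hk : 1 ≤ k) :
    violation (agentSum (G ((k : ℝ)⁻¹ • ∑ l ∈ Finset.Icc 1 k, x l))) ≤
      √L / k * (√(quadForm A (y 0)) + C₁ + C₂) := by
  refine (hit.violation_average_le hwt hprog hL hv hk).trans ?_
  have hA := hwt.posSemidef_left
  have hinitial : √(quadForm A (y 0 - consensus r)) ≤ √(quadForm A (y 0)) + C₁ := by
    refine (sqrt_quadForm_sub_le hA _ _).trans (add_le_add_right ?_ _)
    have hr : 0 ≤ r ⬝ᵥ r := dotProduct_self_star_nonneg r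
    rw [hC₁, ← Real.sqrt_mul' L hr]
    exact Real.sqrt_le_sqrt (hL r)
  have hfinal : √(quadForm A (y k - consensus r)) ≤ C₂ := by
    refine (hit.sqrt_quadForm_sub_consensus_le hwt hprog hsaddle hq hHtd hv hvs hvs_sub k).trans ?_
    rw [hC₂, lyapunov]
    gcongr
    exact (Real.sqrt_le_iff.1 hinitial).2
  have htriangle := sqrt_quadForm_sub_le hA (y k - consensus r) (y 0 - consensus r)
  rw [sub_sub_sub_cancel_right] at htriangle
  gcongr
  linarith

section ProximalForm

variable {ι : Type*} [Fintype ι] {κ : ι → Type*} [∀ i, Fintype (κ i)] {α : ℝ}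

/-- The proximal form `u ↦ α‖u‖²` on a product of coordinate spaces, with the Euclidean norm. -/
noncomputable def proximalForm (α : ℝ) : QuadraticForm ℝ (∀ i, κ i → ℝ) :=
  α • QuadraticMap.pi fun _ => QuadraticMap.pi fun _ => QuadraticMap.sq

theorem proximalForm_apply (u : ∀ i, κ i → ℝ) : proximalForm α u = α * ∑ i, ∑ j, u i j ^ 2 := by
  simp [proximalForm, QuadraticMap.pi_apply, sq]

theorem proximalForm_nonneg (hα : 0 ≤ α) (u : ∀ i, κ i → ℝ) : 0 ≤ proximalForm α u := by
  rw [proximalForm_apply]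
  positivity

theorem half_mul_proximalForm (u : ∀ i, κ i → ℝ) :
    1 / 2 * proximalForm α u = α / 2 * ∑ i, ∑ j, u i j ^ 2 := by
  rw [proximalForm_apply]
  ring

end ProximalForm

theorem stmt2
    (N m p : ℕ) (hN : 1 ≤ N) (hm : 1 ≤ m) (hp : 1 ≤ p)
    (d : Fin N → ℕ)
    (X : ∀ i : Fin N, Set (Fin (d i) → ℝ))
    (hXne : ∀ i, (X i).Nonempty) (hXcl : ∀ i, IsClosed (X i))
    (hXcv : ∀ i, Convex ℝ (X i))
    (f : ∀ i : Fin N, (Fin (d i) → ℝ) → ℝ)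
    (hf : ∀ i, ConvexOn ℝ Set.univ (f i))
    (g : ∀ i : Fin N, (Fin (d i) → ℝ) → Fin m → ℝ)
    (hg : ∀ i j, ConvexOn ℝ Set.univ (fun xi => g i xi j))
    (B : ∀ i : Fin N, Matrix (Fin p) (Fin (d i)) ℝ) (c : ∀ i : Fin N, Fin p → ℝ)
    (F : (∀ i, Fin (d i) → ℝ) → ℝ) (hF : ∀ x, F x = ∑ i, f i (x i))
    (tg : (∀ i, Fin (d i) → ℝ) → Idx N m p → ℝ)
    (htg1 : ∀ x (i : Fin N) (j : Fin m), tg x (i, Sum.inl j) = g i (x i) j)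
    (htg2 : ∀ x (i : Fin N) (j : Fin p), tg x (i, Sum.inr j) = (B i *ᵥ x i + c i) j)
    (ρ : ℝ) (hρ : 0 < ρ)
    (PA PH PHt : Matrix (Fin N) (Fin N) ℝ)
    (hPA : PA.PosSemidef) (hPH : PH.PosSemidef) (hPHt : PHt.PosSemidef)
    (hDdiag : (PA + ρ • PH).IsDiag) (hDpd : (PA + ρ • PH).PosDef)
    (hHHt : (PH - PHt).PosSemidef)
    (hPHnull : ∀ v : Fin N → ℝ, PH *ᵥ v = 0 ↔ ∃ t : ℝ, v = fun _ => t)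
    (hPHtnull : ∀ v : Fin N → ℝ, PHt *ᵥ v = 0 ↔ ∃ t : ℝ, v = fun _ => t)
    (A Htld D : Matrix (Idx N m p) (Idx N m p) ℝ)
    (hA : A = PA ⊗ₖ (1 : Matrix (Blk m p) (Blk m p) ℝ))
    (hHtld : Htld = PHt ⊗ₖ (1 : Matrix (Blk m p) (Blk m p) ℝ))
    (hD : D = A + ρ • (PH ⊗ₖ (1 : Matrix (Blk m p) (Blk m p) ℝ)))
    (Hhalf : Matrix (Idx N m p) (Idx N m p) ℝ)
    (hHhalfpsd : Hhalf.PosSemidef) (hHhalfsq : Hhalf * Hhalf = Htld)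
    (Htdag : Matrix (Idx N m p) (Idx N m p) ℝ) (hHtdag : IsMPInv Htld Htdag)
    (Hhalfdag : Matrix (Idx N m p) (Idx N m p) ℝ) (hHhalfdag : IsMPInv Hhalf Hhalfdag)
    (lam1 : ℝ)
    (hlam1ev : ∃ v : Fin N → ℝ, v ≠ 0 ∧ PA *ᵥ v = lam1 • v)
    (hlam1max : ∀ (μ : ℝ) (v : Fin N → ℝ), v ≠ 0 → PA *ᵥ v = μ • v → μ ≤ lam1)
    (x : ℕ → ∀ i, Fin (d i) → ℝ) (y z : ℕ → Idx N m p → ℝ)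
    (hxX : ∀ k, ∀ i, x (k + 1) i ∈ X i)
    (hy0 : memK (y 0))
    (hyupd : ∀ k, y (k + 1) = projK (D⁻¹ *ᵥ ((A *ᵥ y k) - (Hhalf *ᵥ z k) + tg (x (k + 1)))))
    (hzupd : ∀ k, z (k + 1) = z k + ρ • (Hhalf *ᵥ y (k + 1)))
    (α : ℝ) (hα : 0 < α)
    (hxmin : ∀ k, ∀ w, (∀ i, w i ∈ X i) →
      F (x (k + 1))
          + (1 / 2) * quadForm D⁻¹ (projK ((A *ᵥ y k) - (Hhalf *ᵥ z k) + tg (x (k + 1))))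
          + (α / 2) * ∑ i, ∑ j, (x (k + 1) i j - x k i j) ^ 2
        ≤ F w + (1 / 2) * quadForm D⁻¹ (projK ((A *ᵥ y k) - (Hhalf *ᵥ z k) + tg w))
          + (α / 2) * ∑ i, ∑ j, (w i j - x k i j) ^ 2)
    (xs : ∀ i, Fin (d i) → ℝ) (hxsX : ∀ i, xs i ∈ X i)
    (hxsg : ∀ j, (∑ i, g i (xs i) j) ≤ 0)
    (hxsh : ∀ j, (∑ i, (B i *ᵥ xs i + c i) j) = 0)
    (mus : Fin m → ℝ) (hmus : ∀ j, 0 ≤ mus j) (lams : Fin p → ℝ)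
    (hcs : (∑ j, mus j * ∑ i, g i (xs i) j) = 0)
    (hsaddle : ∀ w, (∀ i, w i ∈ X i) →
      F xs + (∑ j, mus j * ∑ i, g i (xs i) j) + (∑ j, lams j * ∑ i, (B i *ᵥ xs i + c i) j)
        ≤ F w + (∑ j, mus j * ∑ i, g i (w i) j) + (∑ j, lams j * ∑ i, (B i *ᵥ w i + c i) j))
    (ys : Idx N m p → ℝ) (hys : ∀ (i : Fin N) (j : Blk m p), ys (i, j) = Sum.elim mus lams j)
    (zstar vstar : Idx N m p → ℝ)
    (hzstar : zstar = Hhalfdag *ᵥ tg xs)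
    (hvstar : vstar = Hhalf *ᵥ zstar)
    (xbar : ℕ → ∀ i, Fin (d i) → ℝ)
    (hxbar : ∀ k (i : Fin N) (j : Fin (d i)),
      xbar k i j = (∑ l ∈ Finset.Icc 1 k, x l i j) / (k : ℝ))
    (C1 C2 : ℝ)
    (hC1 : C1 = Real.sqrt ((N : ℝ) * lam1) * Real.sqrt ((∑ j, (mus j) ^ 2) + ∑ j, (lams j) ^ 2))
    (hC2 : C2 = Real.sqrt ((Real.sqrt (quadForm A (y 0)) + C1) ^ 2
      + α * (∑ i, ∑ j, (x 0 i j - xs i j) ^ 2)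
      + (1 / ρ) * quadForm Htdag ((Hhalf *ᵥ z 0) - vstar)))
    :
    ∀ k : ℕ, 1 ≤ k →
      Real.sqrt ((∑ j : Fin m, (max (∑ i, g i (xbar k i) j) 0) ^ 2)
          + ∑ j : Fin p, (∑ i, (B i *ᵥ xbar k i + c i) j) ^ 2)
        ≤ Real.sqrt ((N : ℝ) * lam1) / (k : ℝ) *
          (Real.sqrt (quadForm A (y 0)) + C1 + C2) := by
  intro k hk
  subst hA hHtld hD hvstar hzstar
  have hHhalfsymm := isHermitian_iff_isSymm.1 hHhalfpsd.1
  have hrange (t) := hHhalfsq ▸ hHhalfdag.range_mulVecLin_le hHhalfsymm ⟨t, rfl⟩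
  have hprog := IsConvexProgram.of_separable (ℓ := fun i => (B i).mulVecLin) hXcv
    (fun i => (hf i).subset (Set.subset_univ _) (hXcv i))
    (fun i j => (hg i j).subset (Set.subset_univ _) (hXcv i)) hF htg1 htg2
  have hwt := IsConsensusWeighting.kronecker_one (β := Blk m p) hρ hPA hPHt hDdiag hDpd hHHt
    hPHnull hPHtnull
  have hit := IsProDUCA.of_sqrt (X := Set.univ.pi X) (q := proximalForm α) hHhalfsq
    (fun k i _ => hxX k i) (fun k => isMinOn_iff.2 fun w hw => by
      simpa only [half_mul_proximalForm, Pi.sub_apply] using hxmin k w fun i => hw i trivial)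
    hyupd hzupd
  have hsaddlePoint : IsSaddlePoint (Set.univ.pi X) F tg xs (Sum.elim mus lams) :=
    .of_complementarySlackness (fun i _ => hxsX i) (by simpa only [htg1] using hxsg)
      (by simpa only [htg2] using hxsh) hmus (by simpa only [htg1] using hcs)
      fun w hw => by simpa only [htg1, htg2] using hsaddle w fun i => hw i trivial
  have hxbar_eq : xbar k = (k : ℝ)⁻¹ • ∑ l ∈ Finset.Icc 1 k, x l := by
    ext i j; simp [hxbar, div_eq_inv_mul]
  have hbound := stmt2_general (C₁ := C1) (C₂ := C2) hit hwt hprog hsaddlePoint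
    (proximalForm_nonneg hα.le) (quadForm_kronecker_one_consensus_le hPA.1 hlam1max) hHtdag.1
    (hrange _) (hrange _) (hHhalfsq ▸ hHhalfdag.mul_self_mulVec_sub hHhalfsymm _)
    (by simpa [dotProduct, ← sq] using hC1) (by simpa [proximalForm_apply] using hC2) hk
  simpa only [← hxbar_eq, violation, agentSum_apply, htg1, htg2, Fintype.card_fin] using hbound
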